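/- arXiv:1506.07756 — 4 statements merged into one kernel-verified Lean document; each statement's English description precedes it below -/
import Mathlib

section
/- Let ρ_in be a density operator on H = H_1 ⊗ … ⊗ H_n that is FFQLS relative to a neighborhood structure N_in = {N_in,i}, and let U = Π_j U_j, where each U_j = U_{N_j} ⊗ I_{N̄_j} is a unitary neighborhood operator relative to a neighborhood N_j ⊆ {1,…,n} and [U_j, U_{j'}] = 0 for all j, j'. Then ρ_out = U ρ_in U† is FFQLS relative to the neighborhood structure N_out = {N_out,i}, where N_out,i = N_in,i ∪ (∪ {N_j : N_j ∩ N_in,i ≠ ∅}). -/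
namespace QDS

open Matrix
open scoped ComplexOrder

/-! ### Basic single-system notions -/

section Single

variable {ι : Type*} [Fintype ι] [DecidableEq ι]

open Classical in
/-- The (unique) positive-semidefinite square root of a positive-semidefinite matrix
(junk value `0` if no positive-semidefinite square root exists). -/
noncomputable def msqrt (A : Matrix ι ι ℂ) : Matrix ι ι ℂ :=
  if h : ∃ B : Matrix ι ι ℂ, B.PosSemidef ∧ B * B = A then h.choose else 0

open Classical in
/-- The Moore–Penrose pseudoinverse of a matrix, defined via its characterizing
properties (it always exists and is unique for complex matrices). -/
noncomputable def mpinv (A : Matrix ι ι ℂ) : Matrix ι ι ℂ :=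
  if h : ∃ B : Matrix ι ι ℂ,
      A * B * A = A ∧ B * A * B = B ∧ (A * B)ᴴ = A * B ∧ (B * A)ᴴ = B * A
  then h.choose else 0

/-- A density operator: positive semidefinite with unit trace. -/
def IsDensity (ρ : Matrix ι ι ℂ) : Prop := ρ.PosSemidef ∧ ρ.trace = 1

/-- A CPTP map in Kraus (operator-sum) form. -/
def IsCPTP (T : Matrix ι ι ℂ →ₗ[ℂ] Matrix ι ι ℂ) : Prop :=
  ∃ (m : ℕ) (M : Fin m → Matrix ι ι ℂ),
    (∀ X, T X = ∑ k, M k * X * (M k)ᴴ) ∧ (∑ k, (M k)ᴴ * M k) = 1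

/-- The Lindblad (QDS) generator with Hamiltonian `Hm` and noise operators `Lk`:
`L(X) = -i[Hm, X] + Σₖ (Lₖ X Lₖ† - ½{Lₖ†Lₖ, X})`. -/
noncomputable def lindbladMap (Hm : Matrix ι ι ℂ) {m : ℕ} (Lk : Fin m → Matrix ι ι ℂ) :
    Matrix ι ι ℂ →ₗ[ℂ] Matrix ι ι ℂ :=
  (-Complex.I) • (LinearMap.mulLeft ℂ Hm - LinearMap.mulRight ℂ Hm) +
    ∑ k, ((LinearMap.mulRight ℂ (Lk k)ᴴ).comp (LinearMap.mulLeft ℂ (Lk k)) -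
      ((1 : ℂ)/2) • (LinearMap.mulLeft ℂ ((Lk k)ᴴ * Lk k) +
        LinearMap.mulRight ℂ ((Lk k)ᴴ * Lk k)))

/-- `L` is a QDS (Lindblad) generator. -/
def IsLindblad (L : Matrix ι ι ℂ →ₗ[ℂ] Matrix ι ι ℂ) : Prop :=
  ∃ Hm : Matrix ι ι ℂ, Hm.IsHermitian ∧
    ∃ (m : ℕ) (Lk : Fin m → Matrix ι ι ℂ), L = lindbladMap Hm Lk

/-- `Ld` is the Hilbert–Schmidt adjoint of `L` (w.r.t. `⟨X,Y⟩ = Tr(X†Y)`). -/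
def IsHSAdjoint (L Ld : Matrix ι ι ℂ →ₗ[ℂ] Matrix ι ι ℂ) : Prop :=
  ∀ X Y : Matrix ι ι ℂ, ((Ld X)ᴴ * Y).trace = (Xᴴ * L Y).trace

/-- The fixed-point set of a (super)operator. -/
def fixSet (T : Matrix ι ι ℂ →ₗ[ℂ] Matrix ι ι ℂ) : Set (Matrix ι ι ℂ) := {X | T X = X}

/-- The support of an operator: the orthogonal complement of its kernel,
equivalently the range of its adjoint. -/
noncomputable def msupp (A : Matrix ι ι ℂ) : Submodule ℂ (ι → ℂ) := LinearMap.range (Aᴴ).mulVecLin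

/-- The support of a set of operators: the span of the union of their supports. -/
noncomputable def suppSet (W : Set (Matrix ι ι ℂ)) : Submodule ℂ (ι → ℂ) := ⨆ O ∈ W, msupp O

/-- The minimal modular-invariant distorted algebra generated by `W` relative to `ρ`:
the smallest subspace containing `W` that is closed under the adjoint, under the
`ρ`-modified product `(X,Y) ↦ X ρ⁻ Y`, and under the modular map `X ↦ ρ^{1/2} X ρ⁻^{1/2}`. -/
noncomputable def Fdist (ρ : Matrix ι ι ℂ) (W : Set (Matrix ι ι ℂ)) :
    Submodule ℂ (Matrix ι ι ℂ) :=
  sInf {S : Submodule ℂ (Matrix ι ι ℂ) | W ⊆ S ∧ (∀ X ∈ S, Xᴴ ∈ S) ∧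
    (∀ X ∈ S, ∀ Y ∈ S, X * mpinv ρ * Y ∈ S) ∧
    (∀ X ∈ S, msqrt ρ * X * mpinv (msqrt ρ) ∈ S)}

/-- `ρ` is globally asymptotically stable for the generator `L`: it is invariant and every
solution of `ẋ = L(x)` starting at a density operator converges to `ρ` as `t → ∞`. -/
def IsGAS (L : Matrix ι ι ℂ →ₗ[ℂ] Matrix ι ι ℂ) (ρ : Matrix ι ι ℂ) : Prop :=
  L ρ = 0 ∧
  ∀ σ : Matrix ι ι ℂ, IsDensity σ →
    ∀ x : ℝ → Matrix ι ι ℂ, x 0 = σ →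
      (∀ t : ℝ, ∀ i j, HasDerivAt (fun s : ℝ => x s i j) (L (x t) i j) t) →
      ∀ i j, Filter.Tendsto (fun t : ℝ => x t i j) Filter.atTop (nhds (ρ i j))

end Single

/-! ### Bipartite notions -/

section Bipartite

variable {α β : Type*} [Fintype α] [Fintype β] [DecidableEq α] [DecidableEq β]

/-- Partial trace over the second factor. -/
noncomputable def ptraceB (ρ : Matrix (α × β) (α × β) ℂ) : Matrix α α ℂ :=
  Matrix.of fun i j => ∑ k : β, ρ (i, k) (j, k)

/-- The operator Schmidt span of `ρ` on the first factor:
`{Tr_B[(I ⊗ B) ρ] : B ∈ B(H_B)}`. -/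
noncomputable def opSchmidtA (ρ : Matrix (α × β) (α × β) ℂ) : Set (Matrix α α ℂ) :=
  {A | ∃ B : Matrix β β ℂ,
    A = ptraceB ((Matrix.kroneckerMap (· * ·) (1 : Matrix α α ℂ) B) * ρ)}

/-- The (vector) Schmidt span of `v ∈ V_A ⊗ V_B` relative to `V_A`: the image of `v`
under partial inner products with vectors of `V_B`. -/
def vSchmidtA (v : α × β → ℂ) : Set (α → ℂ) :=
  {w | ∃ b : β → ℂ, w = fun a => ∑ j, (starRingEnd ℂ) (b j) * v (a, j)}

/-- `Σ_A(v) ⊗ V_B` as a subspace of `V_A ⊗ V_B`. -/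
noncomputable def extVSchmidtA (v : α × β → ℂ) : Submodule ℂ (α × β → ℂ) :=
  Submodule.span ℂ {v' | ∃ w ∈ vSchmidtA v, ∃ b : β → ℂ, v' = fun p => w p.1 * b p.2}

end Bipartite

/-! ### Multipartite notions -/

section Multipartite

variable {n : ℕ} {d : Fin n → Type*} [∀ a, Fintype (d a)] [∀ a, DecidableEq (d a)]

/-- Index type of the neighborhood factor `H_N`. -/
abbrev nbhdIdx (d : Fin n → Type*) (N : Finset (Fin n)) : Type _ :=
  ∀ a : {x : Fin n // x ∈ N}, d a

/-- Index type of the complementary factor `H_N̄`. -/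
abbrev nbhdCoIdx (d : Fin n → Type*) (N : Finset (Fin n)) : Type _ :=
  ∀ a : {x : Fin n // ¬ x ∈ N}, d a

/-- The factorization `H ≃ H_N ⊗ H_N̄` at the level of index types. -/
def splitEquiv (d : Fin n → Type*) (N : Finset (Fin n)) :
    (∀ a, d a) ≃ nbhdIdx d N × nbhdCoIdx d N :=
  Equiv.piEquivPiSubtypeProd (fun x => x ∈ N) d

variable (d)

/-- The operator `A ⊗ B` on `H = H_N ⊗ H_N̄`, viewed as an operator on `H`. -/
noncomputable def splitLift (N : Finset (Fin n))
    (A : Matrix (nbhdIdx d N) (nbhdIdx d N) ℂ)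
    (B : Matrix (nbhdCoIdx d N) (nbhdCoIdx d N) ℂ) :
    Matrix (∀ a, d a) (∀ a, d a) ℂ :=
  (Matrix.kroneckerMap (· * ·) A B).submatrix (splitEquiv d N) (splitEquiv d N)

/-- The neighborhood operator `A ⊗ I_N̄` on `H`. -/
noncomputable def nbhdLift (N : Finset (Fin n))
    (A : Matrix (nbhdIdx d N) (nbhdIdx d N) ℂ) : Matrix (∀ a, d a) (∀ a, d a) ℂ :=
  splitLift d N A 1

/-- The operator `I_N ⊗ B` on `H`. -/
noncomputable def coLift (N : Finset (Fin n))
    (B : Matrix (nbhdCoIdx d N) (nbhdCoIdx d N) ℂ) : Matrix (∀ a, d a) (∀ a, d a) ℂ :=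
  splitLift d N 1 B

/-- The reduced state `ρ_N = Tr_N̄(ρ)` on the neighborhood `N`. -/
noncomputable def nbhdPtrace (N : Finset (Fin n)) (ρ : Matrix (∀ a, d a) (∀ a, d a) ℂ) :
    Matrix (nbhdIdx d N) (nbhdIdx d N) ℂ :=
  Matrix.of fun i j => ∑ k : nbhdCoIdx d N,
    ρ ((splitEquiv d N).symm (i, k)) ((splitEquiv d N).symm (j, k))

/-- The operator Schmidt span of `ρ` on the neighborhood `N`:
`Σ_N(ρ) = {Tr_N̄[(I_N ⊗ B) ρ] : B}`. -/
noncomputable def nbhdSchmidt (N : Finset (Fin n)) (ρ : Matrix (∀ a, d a) (∀ a, d a) ℂ) :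
    Set (Matrix (nbhdIdx d N) (nbhdIdx d N) ℂ) :=
  {A | ∃ B : Matrix (nbhdCoIdx d N) (nbhdCoIdx d N) ℂ,
    A = nbhdPtrace d N (coLift d N B * ρ)}

/-- The extended minimal modular-invariant distorted algebra
`F_{ρ_N}(Σ_N(ρ)) ⊗ B(H_N̄)` as a subspace of `B(H)`. -/
noncomputable def extF (N : Finset (Fin n)) (ρ : Matrix (∀ a, d a) (∀ a, d a) ℂ) :
    Submodule ℂ (Matrix (∀ a, d a) (∀ a, d a) ℂ) :=
  Submodule.span ℂ {X | ∃ A ∈ Fdist (nbhdPtrace d N ρ) (nbhdSchmidt d N ρ),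
    ∃ B : Matrix (nbhdCoIdx d N) (nbhdCoIdx d N) ℂ, X = splitLift d N A B}

/-- A neighborhood QDS generator for `N`: a Lindblad generator whose Hamiltonian and
noise operators all act as `X_N ⊗ I_N̄`. -/
def IsNbhdGen (N : Finset (Fin n))
    (L : Matrix (∀ a, d a) (∀ a, d a) ℂ →ₗ[ℂ] Matrix (∀ a, d a) (∀ a, d a) ℂ) : Prop :=
  ∃ HN : Matrix (nbhdIdx d N) (nbhdIdx d N) ℂ, HN.IsHermitian ∧
    ∃ (m : ℕ) (Lk : Fin m → Matrix (nbhdIdx d N) (nbhdIdx d N) ℂ),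
      L = lindbladMap (nbhdLift d N HN) fun k => nbhdLift d N (Lk k)

/-- A purely dissipative neighborhood generator for `N` (zero Hamiltonian in some
Lindblad representation). -/
def IsDissipNbhdGen (N : Finset (Fin n))
    (L : Matrix (∀ a, d a) (∀ a, d a) ℂ →ₗ[ℂ] Matrix (∀ a, d a) (∀ a, d a) ℂ) : Prop :=
  ∃ (m : ℕ) (Lk : Fin m → Matrix (nbhdIdx d N) (nbhdIdx d N) ℂ),
    L = lindbladMap 0 fun k => nbhdLift d N (Lk k)

/-- The family of neighborhood generators `Lj` is frustration free: every invariant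
state of the sum is invariant for each component. -/
def IsFFFamily {M : ℕ}
    (Lj : Fin M → (Matrix (∀ a, d a) (∀ a, d a) ℂ →ₗ[ℂ] Matrix (∀ a, d a) (∀ a, d a) ℂ)) :
    Prop :=
  ∀ ρ : Matrix (∀ a, d a) (∀ a, d a) ℂ, IsDensity ρ → (∑ j, Lj j) ρ = 0 → ∀ j, Lj j ρ = 0

/-- `ρ` is frustration-free quasi-locally stabilizable relative to the neighborhood
structure `Nb`. -/
def IsFFQLS {M : ℕ} (Nb : Fin M → Finset (Fin n))
    (ρ : Matrix (∀ a, d a) (∀ a, d a) ℂ) : Prop :=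
  ∃ Lj : Fin M → (Matrix (∀ a, d a) (∀ a, d a) ℂ →ₗ[ℂ] Matrix (∀ a, d a) (∀ a, d a) ℂ),
    (∀ j, IsNbhdGen d (Nb j) (Lj j)) ∧ IsFFFamily d Lj ∧ IsGAS (∑ j, Lj j) ρ

/-- A pure state `|ψ⟩⟨ψ|` is dissipatively quasi-locally stabilizable relative to `Nb`:
it is GAS for a QL generator whose components have zero Hamiltonian and neighborhood
noise operators annihilating `ψ`. -/
def IsDQLS {M : ℕ} (Nb : Fin M → Finset (Fin n)) (ψ : (∀ a, d a) → ℂ) : Prop :=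
  ∃ Lj : Fin M → (Matrix (∀ a, d a) (∀ a, d a) ℂ →ₗ[ℂ] Matrix (∀ a, d a) (∀ a, d a) ℂ),
    (∀ j, ∃ (m : ℕ) (Dk : Fin m → Matrix (nbhdIdx d (Nb j)) (nbhdIdx d (Nb j)) ℂ),
      Lj j = lindbladMap 0 (fun k => nbhdLift d (Nb j) (Dk k)) ∧
      ∀ k, (nbhdLift d (Nb j) (Dk k)).mulVec ψ = 0) ∧
    IsGAS (∑ j, Lj j) (Matrix.vecMulVec ψ (star ψ))

/-- The (vector) Schmidt span of `ψ` relative to the neighborhood factor `H_N`. -/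
def vecSchmidt (N : Finset (Fin n)) (ψ : (∀ a, d a) → ℂ) : Set (nbhdIdx d N → ℂ) :=
  {w | ∃ b : nbhdCoIdx d N → ℂ,
    w = fun i => ∑ k, (starRingEnd ℂ) (b k) * ψ ((splitEquiv d N).symm (i, k))}

/-- `Σ_N(ψ) ⊗ H_N̄` as a subspace of `H`. -/
noncomputable def extVecSchmidt (N : Finset (Fin n)) (ψ : (∀ a, d a) → ℂ) :
    Submodule ℂ ((∀ a, d a) → ℂ) :=
  Submodule.span ℂ {v | ∃ w ∈ vecSchmidt d N ψ, ∃ b : nbhdCoIdx d N → ℂ,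
    v = fun x => w ((splitEquiv d N) x).1 * b ((splitEquiv d N) x).2}

end Multipartite

/-!
The factors of `U` commute, so for each `i` one can write `U = Q R`, where `Q` collects the `U_j`
whose neighborhood meets `N_in,i` and `R` the others. `R` commutes with every neighborhood operator
`X` for `N_in,i`, hence `U X U† = Q X Q†` is a neighborhood operator for `N_out,i`. Conjugation by
`U` is a ⋆-automorphism: it carries Lindblad generators to Lindblad generators with conjugated
Hamiltonian and noise operators, states to states, kernels to kernels and trajectories to
trajectories. Conjugating a frustration-free generator that stabilizes `ρ_in` therefore yields one
for `ρ_out` whose terms are local relative to `N_out`.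
-/

/-! ### Commuting products of unitaries -/

theorem conjStarAlgAut_eq_self_of_commute {R A : Type*} [CommSemiring R] [Semiring A] [StarMul A]
    [Algebra R A] {u : unitary A} {x : A} (h : Commute (u : A) x) :
    Unitary.conjStarAlgAut R A u x = x := by
  rw [Unitary.conjStarAlgAut_apply, h.eq, mul_assoc, Unitary.mul_star_self_of_mem u.2, mul_one]

open scoped Function in
theorem noncommProd_univ_eq_prod_ofFn {α : Type*} [Monoid α] {K : ℕ} (f : Fin K → α)
    (hf : ((Finset.univ : Finset (Fin K)) : Set (Fin K)).Pairwise (Commute on f)) :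
    Finset.univ.noncommProd f hf = (List.ofFn f).prod := by
  rw [List.ofFn_eq_map, ← Finset.noncommProd_toFinset _ f (by simpa using hf)
    (List.nodup_finRange K)]
  exact Finset.noncommProd_congr (List.toFinset_finRange K).symm (fun _ _ => rfl) hf

open scoped Function in
theorem conjStarAlgAut_noncommProd_mem {R A κ : Type*} [CommSemiring R] [StarRing R] [Semiring A]
    [StarRing A] [Algebra R A] [StarModule R A] {S T : StarSubalgebra R A} (hST : S ≤ T)
    (s : Finset κ) (u : κ → unitary A) (hu : (s : Set κ).Pairwise (Commute on u))
    (h : ∀ j ∈ s, (u j : A) ∈ T ∨ ∀ x ∈ S, Commute (u j : A) x) {x : A} (hx : x ∈ S) :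
    Unitary.conjStarAlgAut R A (s.noncommProd u hu) x ∈ T := by
  classical
  let p : κ → Prop := fun j => (u j : A) ∈ T
  let q : unitary A := (s.filter p).noncommProd u (hu.mono (s.filter_subset p))
  let r : unitary A := (s.filter (¬ p ·)).noncommProd u (hu.mono (s.filter_subset _))
  have hqr : s.noncommProd u hu = q * r :=
    (Finset.noncommProd_congr (Finset.filter_union_filter_not_eq p s).symm
      (fun _ _ => rfl) hu).trans
      (Finset.noncommProd_union_of_disjoint (Finset.disjoint_filter_filter_not s s p) u _)
  have hq : (q : A) ∈ T :=
    Finset.noncommProd_induction _ u _ (fun q => (q : A) ∈ T) (fun _ _ => mul_mem) (one_mem T)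
      fun j hj => (Finset.mem_filter.mp hj).2
  have hr : Commute (r : A) x :=
    Finset.noncommProd_induction _ u _ (fun r => Commute (r : A) x)
      (fun _ _ => Commute.mul_left) (Commute.one_left x)
      fun j hj => (h j (Finset.mem_filter.mp hj).1).resolve_left (Finset.mem_filter.mp hj).2 x hx
  rw [hqr, Unitary.conjStarAlgAut_mul_apply, conjStarAlgAut_eq_self_of_commute hr,
    Unitary.conjStarAlgAut_apply]
  exact mul_mem (mul_mem hq (hST hx)) (star_mem hq)

/-! ### Algebras of neighborhood operators -/

section Locality

variable {n : ℕ} {d : Fin n → Type*} {N N' : Finset (Fin n)}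

theorem splitLift_mul_splitLift [∀ a, Fintype (d a)] (A A' : Matrix (nbhdIdx d N) (nbhdIdx d N) ℂ)
    (B B' : Matrix (nbhdCoIdx d N) (nbhdCoIdx d N) ℂ) :
    splitLift d N A B * splitLift d N A' B' = splitLift d N (A * A') (B * B') := by
  rw [splitLift, splitLift, submatrix_mul_equiv, splitLift, mul_kronecker_mul]

theorem nbhdLift_apply [∀ a, DecidableEq (d a)] (A : Matrix (nbhdIdx d N) (nbhdIdx d N) ℂ)
    (x y : ∀ a, d a) :
    nbhdLift d N A x y =
      if ∀ a ∉ N, x a = y a then A (N.restrict x) (N.restrict y) else 0 := by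
  simp only [nbhdLift, splitLift, submatrix_apply, kroneckerMap_apply, one_apply, splitEquiv,
    Equiv.piEquivPiSubtypeProd_apply, funext_iff, Subtype.forall, mul_ite, mul_one, mul_zero]
  rfl

theorem coLift_apply [∀ a, DecidableEq (d a)] (B : Matrix (nbhdCoIdx d N) (nbhdCoIdx d N) ℂ)
    (x y : ∀ a, d a) :
    coLift d N B x y =
      if ∀ a ∈ N, x a = y a then B (fun a => x a) (fun a => y a) else 0 := by
  simp only [coLift, splitLift, submatrix_apply, kroneckerMap_apply, one_apply, splitEquiv,
    Equiv.piEquivPiSubtypeProd_apply, funext_iff, Subtype.forall, ite_mul, one_mul, zero_mul]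

theorem exists_coLift_eq_nbhdLift [∀ a, DecidableEq (d a)] (h : Disjoint N N')
    (B : Matrix (nbhdIdx d N') (nbhdIdx d N') ℂ) :
    ∃ C : Matrix (nbhdCoIdx d N) (nbhdCoIdx d N) ℂ, coLift d N C = nbhdLift d N' B := by
  have hN (a : N') : a.1 ∉ N := Finset.disjoint_right.mp h a.2
  refine ⟨of fun u v => if ∀ a : {a // a ∉ N}, a.1 ∉ N' → u a = v a then
    B (fun a => u ⟨a, hN a⟩) (fun a => v ⟨a, hN a⟩) else 0, ?_⟩
  ext x y
  simp only [coLift_apply, nbhdLift_apply, of_apply]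
  rw [← ite_and]
  exact if_congr (by simp only [Subtype.forall] at hN ⊢; grind) rfl rfl

variable [∀ a, Fintype (d a)] [∀ a, DecidableEq (d a)]

theorem commute_nbhdLift_coLift (A : Matrix (nbhdIdx d N) (nbhdIdx d N) ℂ)
    (B : Matrix (nbhdCoIdx d N) (nbhdCoIdx d N) ℂ) :
    Commute (nbhdLift d N A) (coLift d N B) := by
  simp only [Commute, SemiconjBy, nbhdLift, coLift, splitLift_mul_splitLift, mul_one, one_mul]

variable (d N) in
/-- The embedding `A ↦ A ⊗ I_N̄` of `B(H_N)` into `B(H)`, as a unital ⋆-homomorphism. -/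
noncomputable def nbhdLiftHom :
    Matrix (nbhdIdx d N) (nbhdIdx d N) ℂ →⋆ₐ[ℂ] Matrix (∀ a, d a) (∀ a, d a) ℂ where
  toFun := nbhdLift d N
  map_one' := by rw [nbhdLift, splitLift, one_kronecker_one, submatrix_one_equiv]
  map_mul' A B := by simp only [nbhdLift, splitLift_mul_splitLift, mul_one]
  map_zero' := by rw [nbhdLift, splitLift, zero_kronecker, submatrix_zero]; rfl
  map_add' A B := by rw [nbhdLift, splitLift, add_kronecker, submatrix_add]; rfl
  commutes' c := by
    rw [Algebra.algebraMap_eq_smul_one, Algebra.algebraMap_eq_smul_one, nbhdLift, splitLift,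
      smul_kronecker, one_kronecker_one, submatrix_smul, Pi.smul_apply, Pi.smul_apply,
      submatrix_one_equiv]
  map_star' A := by
    rw [star_eq_conjTranspose, star_eq_conjTranspose, nbhdLift, nbhdLift, splitLift, splitLift,
      conjTranspose_submatrix, conjTranspose_kronecker, conjTranspose_one]

@[simp]
theorem nbhdLiftHom_apply (A : Matrix (nbhdIdx d N) (nbhdIdx d N) ℂ) :
    nbhdLiftHom d N A = nbhdLift d N A := rfl

variable (d N) in
/-- The ⋆-algebra `B(H_N) ⊗ I_N̄` of neighborhood operators for `N`. -/
noncomputable def nbhdAlgebra : StarSubalgebra ℂ (Matrix (∀ a, d a) (∀ a, d a) ℂ) :=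
  (nbhdLiftHom d N).range

theorem mem_nbhdAlgebra {X : Matrix (∀ a, d a) (∀ a, d a) ℂ} :
    X ∈ nbhdAlgebra d N ↔ ∃ A, nbhdLift d N A = X := Iff.rfl

theorem nbhdLift_mem_nbhdAlgebra (A : Matrix (nbhdIdx d N) (nbhdIdx d N) ℂ) :
    nbhdLift d N A ∈ nbhdAlgebra d N := ⟨A, rfl⟩

theorem nbhdAlgebra_mono (h : N ⊆ N') : nbhdAlgebra d N ≤ nbhdAlgebra d N' := by
  intro X hX
  obtain ⟨A, rfl⟩ := mem_nbhdAlgebra.mp hX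
  refine mem_nbhdAlgebra.mpr ⟨of fun u v => if ∀ a : N', a.1 ∉ N → u a = v a then
    A (Finset.restrict₂ h u) (Finset.restrict₂ h v) else 0, ?_⟩
  ext x y
  simp only [nbhdLift_apply, of_apply]
  rw [← ite_and]
  exact if_congr (by simp only [Finset.restrict, Subtype.forall]; grind) rfl rfl

theorem commute_of_mem_nbhdAlgebra (h : Disjoint N N') {X Y : Matrix (∀ a, d a) (∀ a, d a) ℂ}
    (hX : X ∈ nbhdAlgebra d N) (hY : Y ∈ nbhdAlgebra d N') : Commute X Y := by
  obtain ⟨A, rfl⟩ := mem_nbhdAlgebra.mp hX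
  obtain ⟨B, rfl⟩ := mem_nbhdAlgebra.mp hY
  obtain ⟨C, hC⟩ := exists_coLift_eq_nbhdLift h B
  exact hC ▸ commute_nbhdLift_coLift A C

end Locality

/-! ### Transport along ⋆-isomorphisms -/

section Transport

variable {ι κ : Type*}

theorem tendsto_linearMap_entry [Finite ι] {α : Type*} {F : Filter α}
    (f : Matrix ι ι ℂ →ₗ[ℂ] Matrix κ κ ℂ) {x : α → Matrix ι ι ℂ} {a : Matrix ι ι ℂ}
    (hx : ∀ i j, Filter.Tendsto (fun s => x s i j) F (nhds (a i j))) (k l : κ) :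
    Filter.Tendsto (fun s => f (x s) k l) F (nhds (f a k l)) := by
  have hx : Filter.Tendsto x F (nhds a) :=
    tendsto_pi_nhds.mpr fun i => tendsto_pi_nhds.mpr (hx i)
  have hf := (f.continuous_of_finiteDimensional.tendsto a).comp hx
  exact tendsto_pi_nhds.mp (tendsto_pi_nhds.mp hf k) l

open scoped Matrix.Norms.Elementwise in
theorem hasDerivAt_linearMap_entry [Finite ι] [Finite κ] (f : Matrix ι ι ℂ →ₗ[ℂ] Matrix κ κ ℂ)
    {x : ℝ → Matrix ι ι ℂ} {x' : Matrix ι ι ℂ} {t : ℝ}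
    (hx : ∀ i j, HasDerivAt (fun s => x s i j) (x' i j) t) (k l : κ) :
    HasDerivAt (fun s => f (x s) k l) (f x' k l) t := by
  cases nonempty_fintype ι
  cases nonempty_fintype κ
  have hx : HasDerivAt x x' t := hasDerivAt_pi.mpr fun i => hasDerivAt_pi.mpr (hx i)
  have hf := ((f.toContinuousLinearMap.restrictScalars ℝ).hasFDerivAt).comp_hasDerivAt t hx
  exact hasDerivAt_pi.mp (hasDerivAt_pi.mp hf k) l

variable [Fintype ι]

theorem IsGAS.conj [Fintype κ] {L : Matrix ι ι ℂ →ₗ[ℂ] Matrix ι ι ℂ} {ρ : Matrix ι ι ℂ}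
    (h : IsGAS L ρ) (e : Matrix ι ι ℂ ≃ₗ[ℂ] Matrix κ κ ℂ)
    (he : ∀ σ, IsDensity σ → IsDensity (e.symm σ)) :
    IsGAS (e.conj L) (e ρ) := by
  obtain ⟨hinv, hconv⟩ := h
  refine ⟨by simp [LinearEquiv.conj_apply_apply, hinv], fun σ hσ x hx0 hx i j => ?_⟩
  have hpull (t : ℝ) (k l : ι) :
      HasDerivAt (fun s => e.symm (x s) k l) (L (e.symm (x t)) k l) t := by
    simpa [LinearEquiv.conj_apply_apply]
      using hasDerivAt_linearMap_entry e.symm.toLinearMap (hx t) k l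
  simpa using tendsto_linearMap_entry e.toLinearMap
    (hconv _ (he σ hσ) (fun t => e.symm (x t)) (by rw [hx0]) hpull) i j

theorem lindbladMap_apply [DecidableEq ι] (H : Matrix ι ι ℂ) {m : ℕ} (L : Fin m → Matrix ι ι ℂ)
    (X : Matrix ι ι ℂ) :
    lindbladMap H L X = (-Complex.I) • (H * X - X * H) +
      ∑ k, (L k * X * (L k)ᴴ - (1 / 2 : ℂ) • ((L k)ᴴ * L k * X + X * ((L k)ᴴ * L k))) := by
  simp [lindbladMap, LinearMap.sum_apply, mul_assoc]

variable [Fintype κ]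

open scoped MatrixOrder in
theorem IsDensity.map {ρ : Matrix ι ι ℂ} (hρ : IsDensity ρ)
    (Φ : Matrix ι ι ℂ ≃⋆ₐ[ℂ] Matrix κ κ ℂ) : IsDensity (Φ ρ) := by
  classical
  exact ⟨(map_nonneg Φ hρ.1.nonneg).posSemidef, (trace_map Φ ρ).trans hρ.2⟩

variable [DecidableEq ι] [DecidableEq κ]

theorem conj_lindbladMap (Φ : Matrix ι ι ℂ ≃⋆ₐ[ℂ] Matrix κ κ ℂ) (H : Matrix ι ι ℂ) {m : ℕ}
    (L : Fin m → Matrix ι ι ℂ) :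
    Φ.toAlgEquiv.toLinearEquiv.conj (lindbladMap H L) = lindbladMap (Φ H) fun k => Φ (L k) := by
  ext1 X
  simp [LinearEquiv.conj_apply_apply, lindbladMap_apply, ← star_eq_conjTranspose, map_star]

end Transport

section Multipartite

theorem IsFFFamily.conj {n n' : ℕ} {d : Fin n → Type*} [∀ a, Fintype (d a)]
    {d' : Fin n' → Type*} [∀ a, Fintype (d' a)] {M : ℕ}
    {L : Fin M → Matrix (∀ a, d a) (∀ a, d a) ℂ →ₗ[ℂ] Matrix (∀ a, d a) (∀ a, d a) ℂ}
    (h : IsFFFamily d L)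
    (e : Matrix (∀ a, d a) (∀ a, d a) ℂ ≃ₗ[ℂ] Matrix (∀ a, d' a) (∀ a, d' a) ℂ)
    (he : ∀ σ, IsDensity σ → IsDensity (e.symm σ)) :
    IsFFFamily d' fun j => e.conj (L j) := by
  intro ρ hρ hker j
  rw [← map_sum, LinearEquiv.conj_apply_apply, map_eq_zero_iff e e.injective] at hker
  rw [LinearEquiv.conj_apply_apply, h _ (he ρ hρ) hker j, map_zero]

variable {n n' : ℕ} {d : Fin n → Type*} [∀ a, Fintype (d a)] [∀ a, DecidableEq (d a)]
  {d' : Fin n' → Type*} [∀ a, Fintype (d' a)] [∀ a, DecidableEq (d' a)]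

theorem exists_isHermitian_nbhdLift_eq {N : Finset (Fin n)}
    {X : Matrix (∀ a, d a) (∀ a, d a) ℂ} (hX : X ∈ nbhdAlgebra d N) (hXH : X.IsHermitian) :
    ∃ A : Matrix (nbhdIdx d N) (nbhdIdx d N) ℂ, A.IsHermitian ∧ nbhdLift d N A = X := by
  obtain ⟨A, rfl⟩ := mem_nbhdAlgebra.mp hX
  -- `nbhdLift` is not injective on a zero-dimensional `H`, so `A` itself need not be Hermitian.
  refine ⟨(1 / 2 : ℂ) • (A + Aᴴ), by simp [IsHermitian, add_comm], ?_⟩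
  have hstar : nbhdLift d N Aᴴ = nbhdLift d N A := (map_star (nbhdLiftHom d N) A).trans hXH
  calc nbhdLift d N ((1 / 2 : ℂ) • (A + Aᴴ))
      = (1 / 2 : ℂ) • (nbhdLift d N A + nbhdLift d N Aᴴ) := by
        simp only [← nbhdLiftHom_apply, map_smul, map_add]
    _ = nbhdLift d N A := by rw [hstar, ← two_smul ℂ, smul_smul]; norm_num

theorem IsNbhdGen.conj {N : Finset (Fin n)} {N' : Finset (Fin n')}
    {L : Matrix (∀ a, d a) (∀ a, d a) ℂ →ₗ[ℂ] Matrix (∀ a, d a) (∀ a, d a) ℂ}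
    (h : IsNbhdGen d N L)
    (Φ : Matrix (∀ a, d a) (∀ a, d a) ℂ ≃⋆ₐ[ℂ] Matrix (∀ a, d' a) (∀ a, d' a) ℂ)
    (hΦ : ∀ X ∈ nbhdAlgebra d N, Φ X ∈ nbhdAlgebra d' N') :
    IsNbhdGen d' N' (Φ.toAlgEquiv.toLinearEquiv.conj L) := by
  obtain ⟨H, hH, m, V, rfl⟩ := h
  have hHerm : (Φ (nbhdLift d N H)).IsHermitian :=
    (IsSelfAdjoint.map (show IsSelfAdjoint H from hH) (nbhdLiftHom d N)).map Φ
  obtain ⟨H', hH', hH'Φ⟩ :=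
    exists_isHermitian_nbhdLift_eq (hΦ _ (nbhdLift_mem_nbhdAlgebra H)) hHerm
  choose V' hV' using fun k => hΦ _ (nbhdLift_mem_nbhdAlgebra (V k))
  exact ⟨H', hH', m, V', by simp [conj_lindbladMap, hH'Φ, ← hV']⟩

theorem IsFFQLS.map {M : ℕ} {Nin : Fin M → Finset (Fin n)} {Nout : Fin M → Finset (Fin n')}
    {ρ : Matrix (∀ a, d a) (∀ a, d a) ℂ} (h : IsFFQLS d Nin ρ)
    (Φ : Matrix (∀ a, d a) (∀ a, d a) ℂ ≃⋆ₐ[ℂ] Matrix (∀ a, d' a) (∀ a, d' a) ℂ)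
    (hΦ : ∀ i, ∀ X ∈ nbhdAlgebra d (Nin i), Φ X ∈ nbhdAlgebra d' (Nout i)) :
    IsFFQLS d' Nout (Φ ρ) := by
  obtain ⟨L, hgen, hff, hgas⟩ := h
  have hdens (σ) (hσ : IsDensity σ) : IsDensity (Φ.symm σ) := hσ.map Φ.symm
  refine ⟨fun j => Φ.toAlgEquiv.toLinearEquiv.conj (L j), fun i => (hgen i).conj Φ (hΦ i),
    hff.conj _ hdens, ?_⟩
  rw [← map_sum]
  exact hgas.conj _ hdens

end Multipartite

/-! ### Statement 13 -/

theorem stmt13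
    {n : ℕ} {d : Fin n → Type*} [∀ a, Fintype (d a)] [∀ a, DecidableEq (d a)]
    {M K : ℕ} (Nin : Fin M → Finset (Fin n)) (NU : Fin K → Finset (Fin n))
    (ρin : Matrix (∀ a, d a) (∀ a, d a) ℂ) (hρ : IsDensity ρin)
    (hffqls : IsFFQLS d Nin ρin)
    (U : Fin K → Matrix (∀ a, d a) (∀ a, d a) ℂ)
    (hU : ∀ j, U j ∈ Matrix.unitaryGroup (∀ a, d a) ℂ)
    (hnbhd : ∀ j, ∃ V : Matrix (nbhdIdx d (NU j)) (nbhdIdx d (NU j)) ℂ,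
      U j = nbhdLift d (NU j) V)
    (hcomm : ∀ j j', U j * U j' = U j' * U j) :
    IsFFQLS d
      (fun i => Nin i ∪
        (Finset.univ.filter fun j => ((NU j) ∩ (Nin i)).Nonempty).biUnion NU)
      ((List.ofFn U).prod * ρin * ((List.ofFn U).prod)ᴴ) := by
  let u (j : Fin K) : unitary (Matrix (∀ a, d a) (∀ a, d a) ℂ) := ⟨U j, hU j⟩
  have hu : ((Finset.univ : Finset (Fin K)) : Set (Fin K)).Pairwise (Function.onFun Commute u) :=
    fun j _ j' _ _ => Subtype.ext (hcomm j j')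
  have hprod : (List.ofFn U).prod = (Finset.univ.noncommProd u hu).1 := by
    rw [noncommProd_univ_eq_prod_ofFn, SubmonoidClass.coe_list_prod, List.map_ofFn]
    rfl
  rw [hprod]
  refine hffqls.map (Unitary.conjStarAlgAut ℂ _ (Finset.univ.noncommProd u hu)) fun i X hX =>
    conjStarAlgAut_noncommProd_mem (nbhdAlgebra_mono Finset.subset_union_left) _ u hu
      (fun j _ => ?_) hX
  obtain ⟨V, hV⟩ := hnbhd j
  have hUj : U j ∈ nbhdAlgebra d (NU j) := hV ▸ nbhdLift_mem_nbhdAlgebra V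
  by_cases hj : (NU j ∩ Nin i).Nonempty
  · exact .inl (nbhdAlgebra_mono ((Finset.subset_biUnion_of_mem NU
      (by simpa using hj)).trans Finset.subset_union_right) hUj)
  · have hdisj : Disjoint (NU j) (Nin i) := by
      rwa [Finset.disjoint_iff_inter_eq_empty, ← Finset.not_nonempty_iff_eq_empty]
    exact .inr fun Y hY => commute_of_mem_nbhdAlgebra hdisj hUj hY

end QDS
end

section
/- Let L = Σ_j L_j be a QL generator relative to a neighborhood structure N on H = H_1 ⊗ … ⊗ H_n, where each neighborhood generator L_j has a Lindblad representation with Hamiltonian H_j and noise operators {L_{k,j}} all in neighborhood form for N_j. Assume: (i) for each j, alg{H_j together with all L_{k,j}} ⊆ alg{Σ_j H_j together with all L_{k,j} over all k, j}; and (ii) there exists a positive-definite density operator ρ with L_j(ρ) = 0 for all j. Then L is frustration free: every state in ker(L) lies in ker(L_j) for all j. -/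
namespace QDS

open Matrix
open scoped ComplexOrder

/-!
Write a generator as `𝓛(Y) = G Y + Y G† + ∑ₖ Kₖ Y Kₖ†`. The drift terms cancel in

  `𝓛(XρX†) - 𝓛(Xρ)X† - X𝓛(ρX†) + X𝓛(ρ)X† = ∑ₖ [Kₖ, X] ρ [Kₖ, X]†`.

Let `ρ` be a full-rank fixed point and `σ = Xρ` another one. Then the left-hand side has trace zero,
so `X` commutes with all `Kₖ`, and `𝓛(Xρ) = [G, X]ρ` shows that it commutes with `G`. Hence the
Heisenberg-picture generator annihilates `X†`, and with it `X`. This makes the left-hand side for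
`X†` traceless as well, so `X†` commutes with all `Kₖ`. So `X` commutes with the star algebra
generated by the Hamiltonian and the noise operators of the sum, which contains those of each
component `𝓛ⱼ`, and `𝓛ⱼ(Xρ) = X𝓛ⱼ(ρ) = 0`.
-/

theorem mem_centralizer_singleton_iff {R A : Type*} [CommSemiring R] [StarRing R] [Semiring A]
    [StarRing A] [Algebra R A] [StarModule R A] {a x : A} :
    a ∈ StarSubalgebra.centralizer R {x} ↔ Commute a x ∧ Commute a (star x) := by
  simp only [StarSubalgebra.mem_centralizer_iff, Set.mem_singleton_iff, forall_eq,
    commute_iff_eq, eq_comm (a := a * _)]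

section StarRing

variable {A κ : Type*} [Ring A] [StarRing A] [Fintype κ]

/-- The Gorini–Kossakowski–Sudarshan–Lindblad map with drift `G` and noise operators `K`, in which
Hamiltonian and anticommutator part are merged into `G`. The adjoint (Heisenberg-picture) map is
`gksl (star G) (star K)`. -/
def gksl (G : A) (K : κ → A) (Y : A) : A :=
  G * Y + Y * star G + ∑ k, K k * Y * star (K k)

/-- Trace preservation of `gksl G K`, expressed as annihilation of the identity by the
Heisenberg-picture map. -/
def IsTracePreserving (G : A) (K : κ → A) : Prop :=
  gksl (star G) (star K) 1 = 0

theorem star_gksl (G : A) (K : κ → A) (Y : A) : star (gksl G K Y) = gksl G K (star Y) := by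
  simp only [gksl, star_add, star_sum, star_mul, star_star, mul_assoc, add_comm]

theorem sum_gksl {J : Type*} [Fintype J] {κ : J → Type*} [∀ j, Fintype (κ j)]
    (G : J → A) (K : ∀ j, κ j → A) (Y : A) :
    ∑ j, gksl (G j) (K j) Y = gksl (∑ j, G j) (Sigma.uncurry K) Y := by
  simp only [gksl, Finset.sum_add_distrib, Finset.sum_mul, Finset.mul_sum, star_sum,
    Fintype.sum_sigma, Sigma.uncurry]

theorem gksl_mul_of_commute {G X : A} {K : κ → A} (hK : ∀ k, Commute (K k) X) (Y : A) :
    gksl G K (X * Y) = X * gksl G K Y + ⁅G, X⁆ * Y := by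
  have hnoise (k : κ) : K k * (X * Y) * star (K k) = X * (K k * Y * star (K k)) := by
    rw [← mul_assoc, (hK k).eq]
    simp only [mul_assoc]
  simp only [gksl, hnoise, mul_add, Finset.mul_sum, Ring.lie_def]
  noncomm_ring

theorem sum_lie_mul_mul_star_lie (G X Y : A) (K : κ → A) :
    ∑ k, ⁅K k, X⁆ * Y * star ⁅K k, X⁆ =
      gksl G K (X * Y * star X) - gksl G K (X * Y) * star X - X * gksl G K (Y * star X) +
        X * gksl G K Y * star X := by
  have hnoise (k : κ) : ⁅K k, X⁆ * Y * star ⁅K k, X⁆ =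
      K k * (X * Y * star X) * star (K k) - K k * (X * Y) * star (K k) * star X -
        X * (K k * (Y * star X) * star (K k)) + X * (K k * Y * star (K k)) * star X := by
    simp only [Ring.lie_def, star_sub, star_mul]
    noncomm_ring
  simp only [gksl, hnoise, Finset.sum_add_distrib, Finset.sum_sub_distrib, ← Finset.sum_mul,
    ← Finset.mul_sum]
  noncomm_ring

namespace IsTracePreserving

variable {G X : A} {K : κ → A}

theorem star_drift_eq (h : IsTracePreserving G K) : star G = -(G + ∑ k, star (K k) * K k) := by
  have hone : star G + G + ∑ k, star (K k) * K k = 0 := by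
    simpa [IsTracePreserving, gksl] using h
  rw [← add_eq_zero_iff_eq_neg, ← add_assoc, hone]

theorem gksl_star_eq_zero (h : IsTracePreserving G K) (hG : Commute G X)
    (hK : ∀ k, Commute (K k) X) : gksl (star G) (star K) X = 0 := by
  have hstar : gksl (star G) (star K) (star X) = 0 := by
    have hKstar : ∀ k, Commute (star K k) (star X) := fun k ↦ (hK k).star_star
    rw [← mul_one (star X), gksl_mul_of_commute hKstar, h, hG.star_star.lie_eq, mul_zero, zero_mul,
      add_zero]
  rw [← star_star X, ← star_gksl, hstar, star_zero]

end IsTracePreserving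

end StarRing

theorem trace_gksl_mul {R ι κ : Type*} [CommRing R] [StarRing R] [Fintype ι] [DecidableEq ι]
    [Fintype κ] (G X Y : Matrix ι ι R) (K : κ → Matrix ι ι R) :
    (gksl G K Y * X).trace = (Y * gksl (star G) (star K) X).trace := by
  have hdrift : (G * Y * X).trace = (Y * X * G).trace := by rw [mul_assoc, trace_mul_comm]
  have hnoise (k : κ) : (K k * Y * star (K k) * X).trace = (Y * (star (K k) * X * K k)).trace := by
    rw [mul_assoc, mul_assoc, trace_mul_comm]
    simp only [mul_assoc]
  simp only [gksl, add_mul, mul_add, Finset.sum_mul, Finset.mul_sum, trace_add, trace_sum, hdrift,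
    hnoise, star_star, Pi.star_apply, mul_assoc Y]
  ring

section Matrix

variable {𝕜 ι κ : Type*} [RCLike 𝕜] [Fintype ι] [Fintype κ]
  {G X ρ : Matrix ι ι 𝕜} {K : κ → Matrix ι ι 𝕜}

open scoped MatrixOrder Matrix.Norms.L2Operator in
theorem trace_mul_mul_star_eq_zero_iff (hρ : ρ.PosDef) :
    (X * ρ * star X).trace = 0 ↔ X = 0 := by
  classical
  obtain ⟨B, hB, rfl⟩ := CStarAlgebra.isStrictlyPositive_iff_eq_mul_star_self.1
    hρ.isStrictlyPositive
  have hsq : X * (B * star B) * star X = X * B * (X * B)ᴴ := by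
    simp only [star_eq_conjTranspose, conjTranspose_mul, Matrix.mul_assoc]
  rw [hsq, trace_mul_conjTranspose_self_eq_zero_iff, hB.mul_left_eq_zero]

theorem sum_trace_mul_mul_star_eq_zero_iff {C : κ → Matrix ι ι 𝕜} (hρ : ρ.PosDef) :
    ∑ k, (C k * ρ * star (C k)).trace = 0 ↔ ∀ k, C k = 0 := by
  have hnonneg : ∀ k ∈ Finset.univ, 0 ≤ (C k * ρ * star (C k)).trace := fun k _ ↦
    (hρ.posSemidef.mul_mul_conjTranspose_same (C k)).trace_nonneg
  rw [Finset.sum_eq_zero_iff_of_nonneg hnonneg]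
  simp only [Finset.mem_univ, true_imp_iff, trace_mul_mul_star_eq_zero_iff hρ]

namespace IsTracePreserving

variable [DecidableEq ι]

theorem trace_gksl (h : IsTracePreserving G K) (Y : Matrix ι ι 𝕜) : (gksl G K Y).trace = 0 := by
  rw [← mul_one (gksl G K Y), trace_gksl_mul, h, mul_zero, trace_zero]

theorem commute_of_trace_gksl_mul_star_eq_zero (h : IsTracePreserving G K) (hρ : ρ.PosDef)
    (hfix : gksl G K ρ = 0) (hX : (gksl G K (X * ρ) * star X).trace = 0) (k : κ) :
    Commute (K k) X := by
  have hstar : X * gksl G K (ρ * star X) = star (gksl G K (X * ρ) * star X) := by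
    rw [star_mul, star_gksl, star_star, star_mul, star_eq_conjTranspose ρ, hρ.isHermitian.eq]
  have hX' : (X * gksl G K (ρ * star X)).trace = 0 := by
    rw [hstar, star_eq_conjTranspose, trace_conjTranspose, hX, star_zero]
  have hsum : ∑ k, (⁅K k, X⁆ * ρ * star ⁅K k, X⁆).trace = 0 := by
    rw [← trace_sum, sum_lie_mul_mul_star_lie G, hfix]
    simp only [trace_sub, h.trace_gksl, hX, hX', mul_zero, zero_mul, sub_zero, add_zero]
  exact commute_iff_lie_eq.2 ((sum_trace_mul_mul_star_eq_zero_iff hρ).1 hsum k)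

theorem mem_centralizer_of_gksl_mul_eq_zero (h : IsTracePreserving G K) (hρ : ρ.PosDef)
    (hfix : gksl G K ρ = 0) (hX : gksl G K (X * ρ) = 0) :
    G ∈ StarSubalgebra.centralizer 𝕜 {X} ∧ ∀ k, K k ∈ StarSubalgebra.centralizer 𝕜 {X} := by
  have hK : ∀ k, Commute (K k) X :=
    h.commute_of_trace_gksl_mul_star_eq_zero hρ hfix (by rw [hX, zero_mul, trace_zero])
  have hG : Commute G X := by
    rw [gksl_mul_of_commute hK, hfix, mul_zero, zero_add] at hX
    exact commute_iff_lie_eq.2 (hρ.isUnit.mul_left_eq_zero.1 hX)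
  have hKstar : ∀ k, Commute (K k) (star X) := by
    refine h.commute_of_trace_gksl_mul_star_eq_zero hρ hfix ?_
    rw [star_star, trace_gksl_mul, h.gksl_star_eq_zero hG hK, mul_zero, trace_zero]
  have hGstar : Commute (star G) X := by
    rw [h.star_drift_eq]
    exact (hG.add_left <| Commute.sum_left _ _ _ fun k _ ↦
      (commute_star_comm.2 (hKstar k)).mul_left (hK k)).neg_left
  exact ⟨mem_centralizer_singleton_iff.2 ⟨hG, commute_star_comm.1 hGstar⟩,
    fun k ↦ mem_centralizer_singleton_iff.2 ⟨hK k, hKstar k⟩⟩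

end IsTracePreserving

end Matrix

section Drift

variable {A κ : Type*} [Ring A] [StarRing A] [Algebra ℂ A] [Fintype κ]

/-- The drift `-i H - ½ ∑ₖ Lₖ† Lₖ` (up to the factor `-i`, the effective non-Hermitian Hamiltonian)
that turns the Lindblad generator of `H` and `L` into `gksl (drift H L) L`. -/
noncomputable def drift (H : A) (L : κ → A) : A :=
  (-Complex.I) • H - ((1 : ℂ) / 2) • ∑ k, star (L k) * L k

theorem sum_drift {J : Type*} [Fintype J] {κ : J → Type*} [∀ j, Fintype (κ j)]
    (H : J → A) (L : ∀ j, κ j → A) :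
    ∑ j, drift (H j) (L j) = drift (∑ j, H j) (Sigma.uncurry L) := by
  simp only [drift, Finset.sum_sub_distrib, Finset.smul_sum, Fintype.sum_sigma, Sigma.uncurry]

variable [StarModule ℂ A]

theorem star_drift {H : A} (hH : IsSelfAdjoint H) (L : κ → A) :
    star (drift H L) = Complex.I • H - ((1 : ℂ) / 2) • ∑ k, star (L k) * L k := by
  simp only [drift, star_sub, star_smul, star_sum, star_mul, star_star, hH.star_eq, star_neg,
    star_div₀, star_one, star_ofNat, Complex.star_def, Complex.conj_I, neg_neg]

theorem isTracePreserving_drift {H : A} (hH : IsSelfAdjoint H) (L : κ → A) :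
    IsTracePreserving (drift H L) L := by
  rw [IsTracePreserving, gksl, star_star, star_drift hH, drift]
  simp only [Pi.star_apply, star_star, mul_one, one_mul]
  module

theorem drift_mem_iff {S : StarSubalgebra ℂ A} {H : A} {L : κ → A} (hL : ∀ k, L k ∈ S) :
    drift H L ∈ S ↔ H ∈ S := by
  have hsum : ((1 : ℂ) / 2) • ∑ k, star (L k) * L k ∈ S :=
    S.smul_mem (sum_mem fun k _ ↦ mul_mem (star_mem (hL k)) (hL k)) _
  rw [drift, sub_eq_add_neg, add_mem_cancel_right (neg_mem hsum)]
  exact S.toSubalgebra.toSubmodule.smul_mem_iff (neg_ne_zero.2 Complex.I_ne_zero)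

end Drift

section Lindblad

variable {ι : Type*} [Fintype ι] [DecidableEq ι]

theorem lindbladMap_apply_s14 {H : Matrix ι ι ℂ} (hH : H.IsHermitian) {m : ℕ}
    (L : Fin m → Matrix ι ι ℂ) (Y : Matrix ι ι ℂ) :
    lindbladMap H L Y = gksl (drift H L) L Y := by
  rw [gksl, star_drift hH, drift]
  simp only [lindbladMap, LinearMap.add_apply, LinearMap.smul_apply, LinearMap.sub_apply,
    LinearMap.sum_apply, LinearMap.comp_apply, LinearMap.mulLeft_apply, LinearMap.mulRight_apply,
    star_eq_conjTranspose, Finset.sum_sub_distrib, ← Finset.smul_sum, Finset.sum_add_distrib,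
    sub_mul, mul_sub, smul_mul_assoc, mul_smul_comm, Finset.sum_mul, Finset.mul_sum]
  module

theorem sum_lindbladMap_apply {J : Type*} [Fintype J] {H : J → Matrix ι ι ℂ}
    (hH : ∀ j, (H j).IsHermitian) {m : J → ℕ} (L : ∀ j, Fin (m j) → Matrix ι ι ℂ)
    (Y : Matrix ι ι ℂ) :
    (∑ j, lindbladMap (H j) (L j)) Y =
      gksl (drift (∑ j, H j) (Sigma.uncurry L)) (Sigma.uncurry L) Y := by
  simp only [LinearMap.sum_apply, lindbladMap_apply_s14 (hH _), sum_gksl, sum_drift]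

theorem lindbladMap_mul_of_mem_centralizer {H X : Matrix ι ι ℂ} (hH : H.IsHermitian) {m : ℕ}
    {L : Fin m → Matrix ι ι ℂ} (hHX : H ∈ StarSubalgebra.centralizer ℂ {X})
    (hLX : ∀ k, L k ∈ StarSubalgebra.centralizer ℂ {X}) (Y : Matrix ι ι ℂ) :
    lindbladMap H L (X * Y) = X * lindbladMap H L Y := by
  have hG : Commute (drift H L) X :=
    (mem_centralizer_singleton_iff.1 ((drift_mem_iff hLX).2 hHX)).1
  have hL : ∀ k, Commute (L k) X := fun k ↦ (mem_centralizer_singleton_iff.1 (hLX k)).1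
  rw [lindbladMap_apply_s14 hH, lindbladMap_apply_s14 hH, gksl_mul_of_commute hL, hG.lie_eq, zero_mul,
    add_zero]

theorem adjoin_le_centralizer_of_sum_lindbladMap_eq_zero {J : Type*} [Fintype J]
    {H : J → Matrix ι ι ℂ} (hH : ∀ j, (H j).IsHermitian) {m : J → ℕ}
    {L : ∀ j, Fin (m j) → Matrix ι ι ℂ} {ρ X : Matrix ι ι ℂ} (hρ : ρ.PosDef)
    (hfix : (∑ j, lindbladMap (H j) (L j)) ρ = 0)
    (hX : (∑ j, lindbladMap (H j) (L j)) (X * ρ) = 0) :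
    StarAlgebra.adjoin ℂ ({∑ j, H j} ∪ {A | ∃ j k, A = L j k}) ≤
      StarSubalgebra.centralizer ℂ {X} := by
  rw [sum_lindbladMap_apply hH] at hfix hX
  have hsum : IsSelfAdjoint (∑ j, H j) := isSelfAdjoint_sum _ fun j _ ↦ hH j
  obtain ⟨hG, hL⟩ :=
    (isTracePreserving_drift hsum _).mem_centralizer_of_gksl_mul_eq_zero hρ hfix hX
  refine StarAlgebra.adjoin_le (Set.union_subset ?_ ?_)
  · exact Set.singleton_subset_iff.2 ((drift_mem_iff hL).1 hG)
  · rintro _ ⟨j, k, rfl⟩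
    exact hL ⟨j, k⟩

end Lindblad

theorem nbhdLift_isHermitian {n : ℕ} (d : Fin n → Type*) [∀ a, DecidableEq (d a)]
    (N : Finset (Fin n)) {A : Matrix (nbhdIdx d N) (nbhdIdx d N) ℂ} (hA : A.IsHermitian) :
    (nbhdLift d N A).IsHermitian := by
  refine IsHermitian.submatrix ?_ _
  rw [IsHermitian, conjTranspose_kronecker, hA.eq, conjTranspose_one]

theorem stmt14_general {ι J : Type*} [Fintype ι] [DecidableEq ι] [Fintype J]
    (H : J → Matrix ι ι ℂ) (hH : ∀ j, (H j).IsHermitian)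
    (m : J → ℕ) (L : ∀ j, Fin (m j) → Matrix ι ι ℂ)
    (halg : ∀ j, StarAlgebra.adjoin ℂ ({H j} ∪ Set.range (L j)) ≤
      StarAlgebra.adjoin ℂ ({∑ j, H j} ∪ {A : Matrix ι ι ℂ | ∃ j k, A = L j k}))
    (ρ : Matrix ι ι ℂ) (hρ : ρ.PosDef) (hfix : ∀ j, lindbladMap (H j) (L j) ρ = 0)
    (σ : Matrix ι ι ℂ) (hσ : (∑ j, lindbladMap (H j) (L j)) σ = 0) (j : J) :
    lindbladMap (H j) (L j) σ = 0 := by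
  obtain ⟨X, rfl⟩ : ∃ X, X * ρ = σ :=
    ⟨σ * ρ⁻¹, nonsing_inv_mul_cancel_right _ _ hρ.det_pos.ne'.isUnit⟩
  have hfixsum : (∑ j, lindbladMap (H j) (L j)) ρ = 0 := by
    rw [LinearMap.sum_apply]
    exact Finset.sum_eq_zero fun j _ ↦ hfix j
  have hle : ({H j} ∪ Set.range (L j) : Set _) ⊆ StarSubalgebra.centralizer ℂ {X} :=
    (StarAlgebra.subset_adjoin ℂ _).trans <| (halg j).trans
      (adjoin_le_centralizer_of_sum_lindbladMap_eq_zero hH hρ hfixsum hσ)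
  rw [lindbladMap_mul_of_mem_centralizer (hH j) (hle (Or.inl rfl))
    fun k ↦ hle (Or.inr ⟨k, rfl⟩), hfix, mul_zero]

/-! ### Statement 14 -/

theorem stmt14
    {n : ℕ} {d : Fin n → Type*} [∀ a, Fintype (d a)] [∀ a, DecidableEq (d a)]
    {M : ℕ} (Nb : Fin M → Finset (Fin n))
    (HN : ∀ j, Matrix (nbhdIdx d (Nb j)) (nbhdIdx d (Nb j)) ℂ)
    (hHerm : ∀ j, (HN j).IsHermitian)
    (m : Fin M → ℕ)
    (Lk : ∀ j, Fin (m j) → Matrix (nbhdIdx d (Nb j)) (nbhdIdx d (Nb j)) ℂ)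
    (halg : ∀ j, StarAlgebra.adjoin ℂ
        ({nbhdLift d (Nb j) (HN j)} ∪ Set.range fun k => nbhdLift d (Nb j) (Lk j k)) ≤
      StarAlgebra.adjoin ℂ
        ({∑ j, nbhdLift d (Nb j) (HN j)} ∪
          {X : Matrix (∀ a, d a) (∀ a, d a) ℂ | ∃ j k, X = nbhdLift d (Nb j) (Lk j k)}))
    (ρ : Matrix (∀ a, d a) (∀ a, d a) ℂ) (hρ : ρ.PosDef) (hρtr : ρ.trace = 1)
    (hfix : ∀ j, lindbladMap (nbhdLift d (Nb j) (HN j))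
      (fun k => nbhdLift d (Nb j) (Lk j k)) ρ = 0) :
    ∀ σ : Matrix (∀ a, d a) (∀ a, d a) ℂ, IsDensity σ →
      (∑ j, lindbladMap (nbhdLift d (Nb j) (HN j))
        fun k => nbhdLift d (Nb j) (Lk j k)) σ = 0 →
      ∀ j, lindbladMap (nbhdLift d (Nb j) (HN j))
        (fun k => nbhdLift d (Nb j) (Lk j k)) σ = 0 := by
  exact fun σ _ hσ ↦ stmt14_general _ (fun j ↦ nbhdLift_isHermitian d (Nb j) (hHerm j)) m _ halg
    ρ hρ hfix σ hσ

end QDS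
end

section
/- Let Π_1^0 and Π_2^0 be orthogonal projections on a finite-dimensional complex Hilbert space with Π_1^0 Π_2^0 ≠ Π_2^0 Π_1^0, and suppose the limit Π_GS^0 = lim_{n→∞} (Π_1^0 Π_2^0)^n exists and is nonzero. Let Π_1, Π_2 be orthogonal projections satisfying Π_1 Π_2 = Π_2 Π_1 and Π_k Π_k^0 = Π_k^0 Π_k = Π_k^0 for k = 1, 2. Then the projection Π_GS = Π_1 Π_2 strictly dominates Π_GS^0, i.e., Π_GS Π_GS^0 = Π_GS^0 = Π_GS^0 Π_GS but Π_GS ≠ Π_GS^0. -/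
namespace QDS

open Matrix
open scoped ComplexOrder

/-! Let `l` be the limit of `(p₁ * p₂) ^ k`, so that `p₁ * p₂` fixes `l` on both sides. A projection
shortens every vector it moves, so `p₁ * p₂` fixes only what both factors fix. Hence `p₁` and `p₂`
fix `l`, and likewise `star l`; therefore `l * star l = star l`, `l` is self-adjoint, and it absorbs
`p₁` and `p₂` on both sides, and with them `q₁` and `q₂`. If `q₁ * q₂` were equal to `l`, then
`p₁ * p₂ = p₁ * (q₁ * q₂) * p₂ = l` would be self-adjoint, and `p₁` and `p₂` would commute. -/

section PowerLimit

open Filter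
open scoped Topology

variable {M : Type*} [Monoid M] [TopologicalSpace M] [T2Space M]
  [SeparatelyContinuousMul M] {a l x : M}

theorem mul_eq_self_of_tendsto_pow (hl : Tendsto (fun k : ℕ => a ^ k) atTop (𝓝 l)) :
    a * l = l :=
  tendsto_nhds_unique (hl.const_mul a) <|
    (hl.comp (tendsto_add_atTop_nat 1)).congr fun k => pow_succ' a k

theorem self_mul_eq_of_tendsto_pow (hl : Tendsto (fun k : ℕ => a ^ k) atTop (𝓝 l)) :
    l * a = l :=
  tendsto_nhds_unique (hl.mul_const a) <|
    (hl.comp (tendsto_add_atTop_nat 1)).congr fun k => pow_succ a k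

theorem limit_mul_eq_of_tendsto_pow (hl : Tendsto (fun k : ℕ => a ^ k) atTop (𝓝 l))
    (hx : a * x = x) : l * x = x := by
  have pow_mul_eq (k : ℕ) : a ^ k * x = x := by
    induction k with
    | zero => rw [pow_zero, one_mul]
    | succ k ih => rw [pow_succ, mul_assoc, hx, ih]
  exact tendsto_nhds_unique (hl.mul_const x) <|
    tendsto_const_nhds.congr fun k => (pow_mul_eq k).symm

end PowerLimit

section Absorption

variable {S : Type*} [Semigroup S] {p q x : S}

theorem mul_eq_right_trans (hqp : q * p = p) (hpx : p * x = x) : q * x = x := by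
  rw [← hpx, ← mul_assoc, hqp]

theorem mul_eq_left_trans (hxp : x * p = x) (hpq : p * q = p) : x * q = x := by
  rw [← hxp, mul_assoc, hpq]

theorem mul_eq_left_of_mul_eq_right [StarMul S] (hp : IsSelfAdjoint p) (hx : IsSelfAdjoint x)
    (hpx : p * x = x) : x * p = x := by
  rw [← ((hp.commute_iff hx).mpr (hpx.symm ▸ hx)).eq, hpx]

end Absorption

section StarProjection

variable {R : Type*} [NonUnitalRing R] [StarRing R] {p q x : R}

-- Pythagoras: `star x * x - star x * (q * x)` is the square norm of `q * x - x`.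
theorem mul_eq_self_of_star_mul_mul_eq (hproper : ∀ y : R, star y * y = 0 → y = 0)
    (hq : IsStarProjection q) (hx : star x * (q * x) = star x * x) : q * x = x := by
  have inner_idem : star x * q * (q * x) = star x * x := by
    rw [mul_assoc, ← mul_assoc q q, hq.isIdempotentElem.eq, hx]
  refine sub_eq_zero.mp (hproper _ ?_)
  rw [star_sub, star_mul, hq.isSelfAdjoint.star_eq, sub_mul, mul_sub, mul_sub, inner_idem, hx,
    mul_assoc, hx, sub_self]

theorem mul_mul_eq_self_iff (hproper : ∀ y : R, star y * y = 0 → y = 0)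
    (hp : IsStarProjection p) (hq : IsStarProjection q) :
    p * q * x = x ↔ p * x = x ∧ q * x = x := by
  refine ⟨fun h => ?_, fun ⟨hpx, hqx⟩ => by rw [mul_assoc, hqx, hpx]⟩
  have hpx : p * x = x :=
    mul_eq_right_trans (q := p) (by rw [← mul_assoc, hp.isIdempotentElem.eq]) h
  have star_mul_eq : star x * p = star x := by
    simpa only [star_mul, hp.isSelfAdjoint.star_eq] using congrArg star hpx
  refine ⟨hpx, mul_eq_self_of_star_mul_mul_eq hproper hq ?_⟩
  calc star x * (q * x) = star x * p * (q * x) := by rw [star_mul_eq]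
    _ = star x * (p * q * x) := by simp only [mul_assoc]
    _ = star x * x := by rw [h]

end StarProjection

section AlternatingProjections

open Filter
open scoped Topology

-- Only separate continuity, so as to admit the strong operator topology on a Hilbert space of any
-- dimension, where the limit always exists.
variable {R : Type*} [Ring R] [StarRing R] [TopologicalSpace R] [T2Space R]
  [SeparatelyContinuousMul R] {p₁ p₂ l : R}

theorem isStarProjection_of_tendsto_mul_pow (hproper : ∀ y : R, star y * y = 0 → y = 0)
    (hp₁ : IsStarProjection p₁) (hp₂ : IsStarProjection p₂)
    (hl : Tendsto (fun k : ℕ => (p₁ * p₂) ^ k) atTop (𝓝 l)) : IsStarProjection l where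
  isIdempotentElem := limit_mul_eq_of_tendsto_pow hl (mul_eq_self_of_tendsto_pow hl)
  isSelfAdjoint := by
    have swap_mul_star : p₂ * p₁ * star l = star l := by
      simpa only [star_mul, hp₁.isSelfAdjoint.star_eq, hp₂.isSelfAdjoint.star_eq] using
        congrArg star (self_mul_eq_of_tendsto_pow hl)
    have mul_star : p₁ * p₂ * star l = star l :=
      (mul_mul_eq_self_iff hproper hp₁ hp₂).mpr
        ((mul_mul_eq_self_iff hproper hp₂ hp₁).mp swap_mul_star).symm
    have self_mul_star : l * star l = star l := limit_mul_eq_of_tendsto_pow hl mul_star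
    exact IsSelfAdjoint.star_iff.mp (self_mul_star ▸ .mul_star_self l)

theorem stmt16_general (hproper : ∀ y : R, star y * y = 0 → y = 0)
    (hp₁ : IsStarProjection p₁) (hp₂ : IsStarProjection p₂) (hnc : ¬Commute p₁ p₂)
    (hl : Tendsto (fun k : ℕ => (p₁ * p₂) ^ k) atTop (𝓝 l)) {q₁ q₂ : R}
    (hq₁ : q₁ * p₁ = p₁ ∧ p₁ * q₁ = p₁) (hq₂ : q₂ * p₂ = p₂ ∧ p₂ * q₂ = p₂) :
    q₁ * q₂ * l = l ∧ l * (q₁ * q₂) = l ∧ q₁ * q₂ ≠ l := by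
  have hl_adj : IsSelfAdjoint l :=
    (isStarProjection_of_tendsto_mul_pow hproper hp₁ hp₂ hl).isSelfAdjoint
  obtain ⟨p₁_mul, p₂_mul⟩ : p₁ * l = l ∧ p₂ * l = l :=
    (mul_mul_eq_self_iff hproper hp₁ hp₂).mp (mul_eq_self_of_tendsto_pow hl)
  have mul_p₁ : l * p₁ = l := mul_eq_left_of_mul_eq_right hp₁.isSelfAdjoint hl_adj p₁_mul
  have mul_p₂ : l * p₂ = l := mul_eq_left_of_mul_eq_right hp₂.isSelfAdjoint hl_adj p₂_mul
  refine ⟨?_, ?_, fun heq => hnc ?_⟩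
  · rw [mul_assoc, mul_eq_right_trans hq₂.1 p₂_mul, mul_eq_right_trans hq₁.1 p₁_mul]
  · rw [← mul_assoc, mul_eq_left_trans mul_p₁ hq₁.2, mul_eq_left_trans mul_p₂ hq₂.2]
  · have mul_eq_limit : p₁ * p₂ = l :=
      calc p₁ * p₂ = p₁ * q₁ * (q₂ * p₂) := by rw [hq₁.2, hq₂.1]
        _ = p₁ * (q₁ * q₂) * p₂ := by simp only [mul_assoc]
        _ = l := by rw [heq, p₁_mul, mul_p₂]
    exact (hp₁.isSelfAdjoint.commute_iff hp₂.isSelfAdjoint).mpr (mul_eq_limit ▸ hl_adj)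

end AlternatingProjections

/-! ### Statement 16 -/

theorem stmt16
    {ι : Type*} [Fintype ι] [DecidableEq ι]
    (P1 P2 PGS0 : Matrix ι ι ℂ)
    (hP1 : P1ᴴ = P1 ∧ P1 * P1 = P1) (hP2 : P2ᴴ = P2 ∧ P2 * P2 = P2)
    (hnc : P1 * P2 ≠ P2 * P1)
    (hlim : Filter.Tendsto (fun k : ℕ => (P1 * P2) ^ k) Filter.atTop (nhds PGS0))
    (hne : PGS0 ≠ 0)
    (Q1 Q2 : Matrix ι ι ℂ)
    (hQ1 : Q1ᴴ = Q1 ∧ Q1 * Q1 = Q1) (hQ2 : Q2ᴴ = Q2 ∧ Q2 * Q2 = Q2)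
    (hQcomm : Q1 * Q2 = Q2 * Q1)
    (hd1 : Q1 * P1 = P1 ∧ P1 * Q1 = P1) (hd2 : Q2 * P2 = P2 ∧ P2 * Q2 = P2) :
    (Q1 * Q2) * PGS0 = PGS0 ∧ PGS0 * (Q1 * Q2) = PGS0 ∧ Q1 * Q2 ≠ PGS0 :=
  stmt16_general (fun _ => conjTranspose_mul_self_eq_zero.mp) ⟨hP1.2, hP1.1⟩ ⟨hP2.2, hP2.1⟩ hnc hlim
    hd1 hd2

end QDS
end

section
/- Let |ψ⟩ be a unit vector in H = H_1 ⊗ … ⊗ H_n and suppose the pure state |ψ⟩⟨ψ| is FFQLS relative to a neighborhood structure N = {N_j}. Then |ψ⟩⟨ψ| is uniquely determined among all density operators by its neighborhood marginals: if τ is a density operator on H with Tr_{N̄_j}(τ) = Tr_{N̄_j}(|ψ⟩⟨ψ|) for every j, then τ = |ψ⟩⟨ψ|. -/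
/-!
Suppose a Lindblad generator `L` annihilates a positive operator `X`. Compressing `L X = 0` by an
operator `Q` with `Q X = 0` leaves only the positive terms `(Q Lₖ) X (Q Lₖ)†`, so the support of
`X` is invariant under every noise operator `Lₖ`, and then also under `K = iH + ½ ∑ Lₖ†Lₖ`. For
`X = |ψ⟩⟨ψ|` this says that `ψ` is a common eigenvector of the `Lₖ` and `K`.

The eigenvalue equation `A ψ = c ψ` amounts to the vanishing of the expectation of
`(A - c)†(A - c)`, so it passes to every state with the same expectations on a `*`-algebra
containing `A`. By frustration freeness each neighborhood generator annihilates `|ψ⟩⟨ψ|`, hence also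
every state with the same neighborhood marginals. Such a state is stationary for the whole
generator, and a globally asymptotically stable state is the only stationary one.
-/

namespace QDS

open Matrix
open scoped ComplexOrder

section Positivity

variable {ι : Type*} [Fintype ι]

theorem mul_eq_zero_of_trace_mul_mul_conjTranspose_eq_zero {κ 𝕜 : Type*} [Fintype κ]
    [RCLike 𝕜] {X : Matrix ι ι 𝕜} {B : Matrix κ ι 𝕜} (hX : X.PosSemidef)
    (h : (B * X * Bᴴ).trace = 0) : B * X = 0 := by
  obtain ⟨C, rfl⟩ : ∃ C : Matrix ι ι 𝕜, X = Cᴴ * C := by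
    classical
    open scoped MatrixOrder in
    exact CStarAlgebra.nonneg_iff_eq_star_mul_self.1 hX.nonneg
  have hBC : B * Cᴴ = 0 := by
    rw [← trace_mul_conjTranspose_self_eq_zero_iff, ← h, conjTranspose_mul,
      conjTranspose_conjTranspose]
    simp only [Matrix.mul_assoc]
  rw [← Matrix.mul_assoc, hBC, Matrix.zero_mul]

theorem vecMulVec_self_star_mul_mul_self {R : Type*} [CommSemiring R] [StarRing R] (ψ : ι → R)
    (A : Matrix ι ι R) :
    vecMulVec ψ (star ψ) * A * vecMulVec ψ (star ψ) =
      (star ψ ⬝ᵥ A *ᵥ ψ) • vecMulVec ψ (star ψ) := by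
  rw [Matrix.mul_assoc, mul_vecMulVec, vecMulVec_mul_vecMulVec, vecMulVec_smul]

theorem mul_vecMulVec_self_star_eq_smul [DecidableEq ι] {R : Type*} [CommRing R] [StarRing R]
    {ψ : ι → R} {A : Matrix ι ι R}
    (h : (1 - vecMulVec ψ (star ψ)) * A * vecMulVec ψ (star ψ) = 0) :
    A * vecMulVec ψ (star ψ) = (star ψ ⬝ᵥ A *ᵥ ψ) • vecMulVec ψ (star ψ) := by
  rw [← vecMulVec_self_star_mul_mul_self, ← sub_eq_zero, ← h]
  simp only [sub_mul, one_mul]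

theorem isDensity_vecMulVec_self_star {ψ : ι → ℂ} (hψ : star ψ ⬝ᵥ ψ = 1) :
    IsDensity (vecMulVec ψ (star ψ)) :=
  ⟨posSemidef_vecMulVec_self_star ψ, by rw [trace_vecMulVec, dotProduct_comm, hψ]⟩

theorem IsDensity.ne_zero {ρ : Matrix ι ι ℂ} (hρ : IsDensity ρ) : ρ ≠ 0 := by
  rintro rfl
  simpa using hρ.2

end Positivity

section Agreement

variable {ι : Type*} [Fintype ι] [DecidableEq ι]

theorem mul_eq_smul_of_trace_mul_eq (S : StarSubalgebra ℂ (Matrix ι ι ℂ)) {ρ τ : Matrix ι ι ℂ}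
    (hτ : τ.PosSemidef) (hS : ∀ A ∈ S, (A * τ).trace = (A * ρ).trace) {A : Matrix ι ι ℂ}
    (hA : A ∈ S) {c : ℂ} (h : A * ρ = c • ρ) : A * τ = c • τ := by
  set B : Matrix ι ι ℂ := A - algebraMap ℂ _ c with hB
  have hBS : B ∈ S := sub_mem hA (algebraMap_mem S c)
  have hB_mul (X : Matrix ι ι ℂ) : B * X = A * X - c • X := by
    rw [hB, sub_mul, ← Algebra.smul_def]
  have hBρ : B * ρ = 0 := by rw [hB_mul, h, sub_self]
  have hBτ : B * τ = 0 := by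
    refine mul_eq_zero_of_trace_mul_mul_conjTranspose_eq_zero hτ ?_
    calc (B * τ * Bᴴ).trace
        = (Bᴴ * B * τ).trace := by rw [trace_mul_comm, Matrix.mul_assoc]
      _ = (Bᴴ * B * ρ).trace := hS _ (mul_mem (star_mem hBS) hBS)
      _ = 0 := by rw [Matrix.mul_assoc, hBρ, Matrix.mul_zero, trace_zero]
  rwa [hB_mul, sub_eq_zero] at hBτ

end Agreement

section Lindblad

variable {ι : Type*} [Fintype ι] {m : ℕ} {Hm : Matrix ι ι ℂ} {Lk : Fin m → Matrix ι ι ℂ}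

/-- The operator `K = iH + ½ ∑ₖ Lₖ†Lₖ`, which collects the Hamiltonian and the anticommutator part
of a Lindblad generator: `L(X) = ∑ₖ Lₖ X Lₖ† - K X - X K†`. It is `i` times the effective
non-Hermitian Hamiltonian `H - (i/2) ∑ₖ Lₖ†Lₖ` of the quantum-jump literature. -/
noncomputable def effGen (Hm : Matrix ι ι ℂ) (Lk : Fin m → Matrix ι ι ℂ) : Matrix ι ι ℂ :=
  Complex.I • Hm + ((1 : ℂ) / 2) • ∑ k, (Lk k)ᴴ * Lk k

theorem conjTranspose_effGen (hH : Hm.IsHermitian) (Lk : Fin m → Matrix ι ι ℂ) :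
    (effGen Hm Lk)ᴴ = -(Complex.I • Hm) + ((1 : ℂ) / 2) • ∑ k, (Lk k)ᴴ * Lk k := by
  simp [effGen, conjTranspose_sum, hH.eq]

variable [DecidableEq ι]

theorem effGen_mem {S : StarSubalgebra ℂ (Matrix ι ι ℂ)} (hHm : Hm ∈ S) (hLk : ∀ k, Lk k ∈ S) :
    effGen Hm Lk ∈ S :=
  add_mem (S.smul_mem hHm _)
    (S.smul_mem (sum_mem fun k _ => mul_mem (star_mem (hLk k)) (hLk k)) _)

theorem lindbladMap_apply_eq_effGen (hH : Hm.IsHermitian) (Lk : Fin m → Matrix ι ι ℂ)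
    (X : Matrix ι ι ℂ) :
    lindbladMap Hm Lk X =
      ∑ k, Lk k * X * (Lk k)ᴴ - effGen Hm Lk * X - X * (effGen Hm Lk)ᴴ := by
  rw [conjTranspose_effGen hH, effGen]
  simp only [lindbladMap, LinearMap.add_apply, LinearMap.smul_apply, LinearMap.sub_apply,
    LinearMap.neg_apply, LinearMap.sum_apply, LinearMap.comp_apply, LinearMap.mulLeft_apply,
    LinearMap.mulRight_apply, Finset.sum_sub_distrib, ← Finset.smul_sum, Finset.sum_add_distrib,
    add_mul, mul_add, smul_mul_assoc, mul_smul_comm, Finset.sum_mul, Finset.mul_sum, mul_neg,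
    smul_sub, smul_add, neg_smul]
  abel

theorem lindbladMap_apply_of_mul_eq_smul (hH : Hm.IsHermitian) {X : Matrix ι ι ℂ}
    (hX : X.IsHermitian) {l : Fin m → ℂ} {μ : ℂ} (hl : ∀ k, Lk k * X = l k • X)
    (hμ : effGen Hm Lk * X = μ • X) :
    lindbladMap Hm Lk X = (∑ k, l k * star (l k) - μ - star μ) • X := by
  have mul_conjTranspose {A : Matrix ι ι ℂ} {c : ℂ} (h : A * X = c • X) : X * Aᴴ = star c • X := by
    simpa [hX.eq] using congrArg conjTranspose h
  rw [lindbladMap_apply_eq_effGen hH, hμ, mul_conjTranspose hμ]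
  simp only [hl, smul_mul_assoc, mul_conjTranspose (hl _), smul_smul, sub_smul, Finset.sum_smul]

theorem mul_noise_mul_eq_zero_of_lindbladMap_eq_zero (hH : Hm.IsHermitian) {X Q : Matrix ι ι ℂ}
    (hX : X.PosSemidef) (hL : lindbladMap Hm Lk X = 0) (hQ : Q * X = 0) (k : Fin m) :
    Q * Lk k * X = 0 := by
  have hQ' : X * Qᴴ = 0 := by simpa [hX.isHermitian.eq] using congrArg conjTranspose hQ
  have compression : ∑ k, Q * Lk k * X * (Q * Lk k)ᴴ = 0 :=
    calc ∑ k, Q * Lk k * X * (Q * Lk k)ᴴ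
        = Q * lindbladMap Hm Lk X * Qᴴ + Q * effGen Hm Lk * (X * Qᴴ)
            + Q * X * (effGen Hm Lk)ᴴ * Qᴴ := by
          rw [lindbladMap_apply_eq_effGen hH]
          simp only [conjTranspose_mul, mul_sub, sub_mul, Finset.mul_sum, Finset.sum_mul,
            Matrix.mul_assoc]
          abel
      _ = 0 := by simp [hL, hQ, hQ']
  have term_nonneg (k : Fin m) : 0 ≤ (Q * Lk k * X * (Q * Lk k)ᴴ).trace :=
    (hX.mul_mul_conjTranspose_same _).trace_nonneg
  have trace_sum_eq_zero : ∑ k, (Q * Lk k * X * (Q * Lk k)ᴴ).trace = 0 := by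
    rw [← trace_sum, compression, trace_zero]
  exact mul_eq_zero_of_trace_mul_mul_conjTranspose_eq_zero hX <|
    (Finset.sum_eq_zero_iff_of_nonneg fun k _ => term_nonneg k).1 trace_sum_eq_zero k
      (Finset.mem_univ k)

theorem mul_effGen_mul_eq_zero_of_lindbladMap_eq_zero (hH : Hm.IsHermitian) {X Q : Matrix ι ι ℂ}
    (hX : X.PosSemidef) (hL : lindbladMap Hm Lk X = 0) (hQ : Q * X = 0) :
    Q * effGen Hm Lk * X = 0 :=
  calc Q * effGen Hm Lk * X
      = ∑ k, Q * Lk k * X * (Lk k)ᴴ - Q * X * (effGen Hm Lk)ᴴ - Q * lindbladMap Hm Lk X := by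
        rw [lindbladMap_apply_eq_effGen hH]
        simp only [mul_sub, Finset.mul_sum, Matrix.mul_assoc]
        abel
    _ = 0 := by simp [mul_noise_mul_eq_zero_of_lindbladMap_eq_zero hH hX hL hQ, hL, hQ]

theorem exists_mul_eq_smul_of_lindbladMap_vecMulVec_eq_zero (hH : Hm.IsHermitian) {ψ : ι → ℂ}
    (hψ : star ψ ⬝ᵥ ψ = 1) (hL : lindbladMap Hm Lk (vecMulVec ψ (star ψ)) = 0) :
    ∃ (l : Fin m → ℂ) (μ : ℂ),
      (∀ k, Lk k * vecMulVec ψ (star ψ) = l k • vecMulVec ψ (star ψ)) ∧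
      effGen Hm Lk * vecMulVec ψ (star ψ) = μ • vecMulVec ψ (star ψ) := by
  have hpsd := posSemidef_vecMulVec_self_star ψ
  have hQ : (1 - vecMulVec ψ (star ψ)) * vecMulVec ψ (star ψ) = 0 := by
    rw [sub_mul, one_mul, vecMulVec_mul_vecMulVec, hψ, one_smul, sub_self]
  exact ⟨_, _,
    fun k => mul_vecMulVec_self_star_eq_smul
      (mul_noise_mul_eq_zero_of_lindbladMap_eq_zero hH hpsd hL hQ k),
    mul_vecMulVec_self_star_eq_smul
      (mul_effGen_mul_eq_zero_of_lindbladMap_eq_zero hH hpsd hL hQ)⟩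

theorem lindbladMap_eq_zero_of_trace_mul_eq {S : StarSubalgebra ℂ (Matrix ι ι ℂ)}
    (hH : Hm.IsHermitian) (hHm : Hm ∈ S) (hLk : ∀ k, Lk k ∈ S) {ψ : ι → ℂ}
    (hψ : star ψ ⬝ᵥ ψ = 1) (hL : lindbladMap Hm Lk (vecMulVec ψ (star ψ)) = 0)
    {τ : Matrix ι ι ℂ} (hτ : τ.PosSemidef)
    (hS : ∀ A ∈ S, (A * τ).trace = (A * vecMulVec ψ (star ψ)).trace) :
    lindbladMap Hm Lk τ = 0 := by
  obtain ⟨l, μ, hl, hμ⟩ := exists_mul_eq_smul_of_lindbladMap_vecMulVec_eq_zero hH hψ hL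
  have hψL := lindbladMap_apply_of_mul_eq_smul hH
    (posSemidef_vecMulVec_self_star ψ).isHermitian hl hμ
  have hτL := lindbladMap_apply_of_mul_eq_smul hH hτ.isHermitian
    (fun k => mul_eq_smul_of_trace_mul_eq S hτ hS (hLk k) (hl k))
    (mul_eq_smul_of_trace_mul_eq S hτ hS (effGen_mem hHm hLk) hμ)
  have scalar_eq_zero : ∑ k, l k * star (l k) - μ - star μ = 0 :=
    (smul_eq_zero.1 (hψL.symm.trans hL)).resolve_right (isDensity_vecMulVec_self_star hψ).ne_zero
  rw [hτL, scalar_eq_zero, zero_smul]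

end Lindblad

section Stability

variable {ι : Type*} [Fintype ι]

theorem IsGAS.eq_of_isDensity_of_apply_eq_zero {L : Matrix ι ι ℂ →ₗ[ℂ] Matrix ι ι ℂ}
    {ρ τ : Matrix ι ι ℂ} (hL : IsGAS L ρ) (hτ : IsDensity τ) (h : L τ = 0) : τ = ρ := by
  have const_solution (t : ℝ) (i j : ι) : HasDerivAt (fun _ : ℝ => τ i j) (L τ i j) t := by
    rw [h]
    exact hasDerivAt_const t (τ i j)
  ext i j
  exact tendsto_nhds_unique tendsto_const_nhds (hL.2 τ hτ (fun _ => τ) rfl const_solution i j)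

end Stability

section Neighborhood

variable {n : ℕ} {d : Fin n → Type*}

theorem trace_nbhdPtrace [∀ a, Fintype (d a)] (N : Finset (Fin n))
    (X : Matrix (∀ a, d a) (∀ a, d a) ℂ) :
    (nbhdPtrace d N X).trace = X.trace := by
  simp only [trace, diag_apply, nbhdPtrace, of_apply]
  rw [← Fintype.sum_prod_type', (splitEquiv d N).symm.sum_comp fun x => X x x]

variable [∀ a, DecidableEq (d a)]

theorem nbhdLift_one (N : Finset (Fin n)) : nbhdLift d N 1 = 1 :=
  (congrArg (Matrix.submatrix · _ _) one_kronecker_one).trans (submatrix_one_equiv _)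

theorem nbhdLift_conjTranspose (N : Finset (Fin n))
    (A : Matrix (nbhdIdx d N) (nbhdIdx d N) ℂ) : nbhdLift d N Aᴴ = (nbhdLift d N A)ᴴ := by
  have h := conjTranspose_kronecker A (1 : Matrix (nbhdCoIdx d N) (nbhdCoIdx d N) ℂ)
  rw [conjTranspose_one] at h
  exact (congrArg (Matrix.submatrix · _ _) h.symm).trans (conjTranspose_submatrix _ _ _).symm

variable [∀ a, Fintype (d a)]

theorem nbhdLift_mul (N : Finset (Fin n)) (A B : Matrix (nbhdIdx d N) (nbhdIdx d N) ℂ) :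
    nbhdLift d N (A * B) = nbhdLift d N A * nbhdLift d N B := by
  have h := mul_kronecker_mul A B (1 : Matrix (nbhdCoIdx d N) (nbhdCoIdx d N) ℂ)
    (1 : Matrix (nbhdCoIdx d N) (nbhdCoIdx d N) ℂ)
  rw [one_mul] at h
  exact (congrArg (Matrix.submatrix · _ _) h).trans (submatrix_mul_equiv _ _ _ _ _).symm

variable (d) in
/-- The embedding `A ↦ A ⊗ I_N̄` of the neighborhood operators into `B(H)`, bundled as a unital
`*`-homomorphism; its range is the algebra of operators localized on `N`. -/
noncomputable def nbhdLiftStarAlgHom (N : Finset (Fin n)) :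
    Matrix (nbhdIdx d N) (nbhdIdx d N) ℂ →⋆ₐ[ℂ] Matrix (∀ a, d a) (∀ a, d a) ℂ where
  __ := AlgHom.ofLinearMap
    { toFun := nbhdLift d N
      map_add' := fun A B => by
        ext i j
        simp [nbhdLift, splitLift, add_mul]
      map_smul' := fun c A => by
        ext i j
        simp [nbhdLift, splitLift, mul_assoc] }
    (nbhdLift_one N) (nbhdLift_mul N)
  map_star' := nbhdLift_conjTranspose N

theorem nbhdPtrace_nbhdLift_mul (N : Finset (Fin n)) (A : Matrix (nbhdIdx d N) (nbhdIdx d N) ℂ)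
    (X : Matrix (∀ a, d a) (∀ a, d a) ℂ) :
    nbhdPtrace d N (nbhdLift d N A * X) = A * nbhdPtrace d N X := by
  ext i j
  simp only [nbhdPtrace, of_apply, mul_apply, Finset.mul_sum,
    ← (splitEquiv d N).symm.sum_comp, Fintype.sum_prod_type]
  rw [Finset.sum_comm]
  simp [nbhdLift, splitLift, one_apply]

theorem trace_nbhdLift_mul (N : Finset (Fin n)) (A : Matrix (nbhdIdx d N) (nbhdIdx d N) ℂ)
    (X : Matrix (∀ a, d a) (∀ a, d a) ℂ) :
    (nbhdLift d N A * X).trace = (A * nbhdPtrace d N X).trace := by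
  rw [← nbhdPtrace_nbhdLift_mul, trace_nbhdPtrace]

theorem IsNbhdGen.apply_eq_zero_of_nbhdPtrace_eq {N : Finset (Fin n)}
    {L : Matrix (∀ a, d a) (∀ a, d a) ℂ →ₗ[ℂ] Matrix (∀ a, d a) (∀ a, d a) ℂ}
    (hN : IsNbhdGen d N L) {ψ : (∀ a, d a) → ℂ} (hψ : star ψ ⬝ᵥ ψ = 1)
    (hL : L (vecMulVec ψ (star ψ)) = 0) {τ : Matrix (∀ a, d a) (∀ a, d a) ℂ}
    (hτ : τ.PosSemidef) (h : nbhdPtrace d N τ = nbhdPtrace d N (vecMulVec ψ (star ψ))) :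
    L τ = 0 := by
  obtain ⟨HN, hHN, m, Lk, rfl⟩ := hN
  have expectation_eq : ∀ A ∈ (nbhdLiftStarAlgHom d N).range,
      (A * τ).trace = (A * vecMulVec ψ (star ψ)).trace := by
    rintro _ ⟨A, rfl⟩
    exact (trace_nbhdLift_mul N A τ).trans (h ▸ (trace_nbhdLift_mul N A _).symm)
  have hermitian_lift : (nbhdLift d N HN).IsHermitian :=
    IsSelfAdjoint.map hHN (nbhdLiftStarAlgHom d N)
  have lift_mem (A : Matrix (nbhdIdx d N) (nbhdIdx d N) ℂ) :
      nbhdLift d N A ∈ (nbhdLiftStarAlgHom d N).range := ⟨A, rfl⟩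
  exact lindbladMap_eq_zero_of_trace_mul_eq hermitian_lift (lift_mem HN)
    (fun k => lift_mem (Lk k)) hψ hL hτ expectation_eq

end Neighborhood

/-! ### Statement 18 -/

theorem stmt18
    {n : ℕ} {d : Fin n → Type*} [∀ a, Fintype (d a)] [∀ a, DecidableEq (d a)]
    {M : ℕ} (Nb : Fin M → Finset (Fin n))
    (ψ : (∀ a, d a) → ℂ) (hψ : ∑ i, (starRingEnd ℂ) (ψ i) * ψ i = 1)
    (h : IsFFQLS d Nb (Matrix.vecMulVec ψ (star ψ))) :
    ∀ τ : Matrix (∀ a, d a) (∀ a, d a) ℂ, IsDensity τ →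
      (∀ j, nbhdPtrace d (Nb j) τ = nbhdPtrace d (Nb j) (Matrix.vecMulVec ψ (star ψ))) →
      τ = Matrix.vecMulVec ψ (star ψ) := by
  intro τ hτ marginals_eq
  have hψ' : star ψ ⬝ᵥ ψ = 1 := hψ
  obtain ⟨L, isNbhdGen_L, isFF_L, isGAS_L⟩ := h
  have L_pure (j : Fin M) : L j (vecMulVec ψ (star ψ)) = 0 :=
    isFF_L _ (isDensity_vecMulVec_self_star hψ') isGAS_L.1 j
  have L_τ (j : Fin M) : L j τ = 0 :=
    (isNbhdGen_L j).apply_eq_zero_of_nbhdPtrace_eq hψ' (L_pure j) hτ.1 (marginals_eq j)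
  refine isGAS_L.eq_of_isDensity_of_apply_eq_zero hτ ?_
  rw [LinearMap.sum_apply, Finset.sum_eq_zero fun j _ => L_τ j]

end QDS
end
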